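/- arXiv:1509.08252 — 2 statements merged into one kernel-verified Lean document; each statement's English description precedes it below -/
import Mathlib

section
/- For every integer n ≥ 2 and every φ ∈ ℝ, the q-deformed matrix 𝔅ₙ,φ is unitary and satisfies the braided parameter-independent Yang–Baxter equation (𝔅ₙ,φ ⊗ I₂)(I₂ ⊗ 𝔅ₙ,φ)(𝔅ₙ,φ ⊗ I₂) = (I₂ ⊗ 𝔅ₙ,φ)(𝔅ₙ,φ ⊗ I₂)(I₂ ⊗ 𝔅ₙ,φ). -/
open Matrix Complex
open scoped Kronecker

/-- The q-deformed gate 𝔅ₙ,φ. -/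
noncomputable def Bnφ (n : ℕ) (φ : ℝ) : Matrix (Fin 4) (Fin 4) ℂ :=
  let a : ℂ := (Real.cos (2 * Real.pi / n) : ℂ)
  let b : ℂ := (Real.sin (2 * Real.pi / n) : ℂ)
  !![a, 0, 0, -Complex.I * b * Complex.exp (Complex.I * φ);
     0, Complex.I * b, a, 0;
     0, a, Complex.I * b, 0;
     -Complex.I * b * Complex.exp (-(Complex.I * φ)), 0, 0, a]

/-- R ⊗ I₂ as an 8×8 matrix. -/
noncomputable def RI (R : Matrix (Fin 4) (Fin 4) ℂ) : Matrix (Fin 8) (Fin 8) ℂ :=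
  Matrix.reindex finProdFinEquiv finProdFinEquiv (R ⊗ₖ (1 : Matrix (Fin 2) (Fin 2) ℂ))

/-- I₂ ⊗ R as an 8×8 matrix. -/
noncomputable def IR (R : Matrix (Fin 4) (Fin 4) ℂ) : Matrix (Fin 8) (Fin 8) ℂ :=
  Matrix.reindex finProdFinEquiv finProdFinEquiv ((1 : Matrix (Fin 2) (Fin 2) ℂ) ⊗ₖ R)

/-!
Let `P` be the swap of the two factors of `ℂ² ⊗ ℂ²`, and let `Y` be the Hermitian matrix with zero
diagonal and off-diagonal entries `i e^{iφ/2}`, `-i e^{-iφ/2}`, so that `Y² = 1`. The gate with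
angle `θ` is `P (cos θ + i sin θ Y ⊗ Y)`. Both factors are unitary, the second because `Y ⊗ Y` is
a self-adjoint involution. Conjugation by `P` permutes the tensor factors, so `P X` solves the
braided Yang–Baxter equation as soon as `X₁₂ X₁₃ X₂₃ = X₂₃ X₁₃ X₁₂`; for
`X = cos θ + i sin θ Y ⊗ Y` the three operators even commute.
-/

lemma braid_mul_of_yang_baxter {M : Type*} [Semigroup M] {s₁ s₂ x₁₂ x₁₃ x₂₃ : M}
    (hs : s₁ * s₂ * s₁ = s₂ * s₁ * s₂)
    (h₁ : SemiconjBy s₁ x₁₃ x₂₃) (h₁' : SemiconjBy s₁ x₂₃ x₁₃)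
    (h₂ : SemiconjBy s₂ x₁₂ x₁₃) (h₂' : SemiconjBy s₂ x₁₃ x₁₂)
    (hx : x₁₂ * x₁₃ * x₂₃ = x₂₃ * x₁₃ * x₁₂) :
    s₁ * x₁₂ * (s₂ * x₂₃) * (s₁ * x₁₂) = s₂ * x₂₃ * (s₁ * x₁₂) * (s₂ * x₂₃) :=
  calc s₁ * x₁₂ * (s₂ * x₂₃) * (s₁ * x₁₂)
      = s₁ * (x₁₂ * s₂) * (x₂₃ * s₁) * x₁₂ := by simp only [mul_assoc]
    _ = s₁ * s₂ * (x₁₃ * s₁) * x₁₃ * x₁₂ := by rw [← h₂'.eq, ← h₁.eq]; simp only [mul_assoc]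
    _ = s₁ * s₂ * s₁ * (x₂₃ * x₁₃ * x₁₂) := by rw [← h₁'.eq]; simp only [mul_assoc]
    _ = s₂ * s₁ * s₂ * (x₁₂ * x₁₃ * x₂₃) := by rw [hs, hx]
    _ = s₂ * s₁ * (x₁₃ * s₂) * x₁₃ * x₂₃ := by rw [← h₂.eq]; simp only [mul_assoc]
    _ = s₂ * (x₂₃ * s₁) * (x₁₂ * s₂) * x₂₃ := by rw [← h₁.eq, ← h₂'.eq]; simp only [mul_assoc]
    _ = s₂ * x₂₃ * (s₁ * x₁₂) * (s₂ * x₂₃) := by simp only [mul_assoc]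

lemma commute_smul_one_add_smul {S A : Type*} [CommSemiring S] [Semiring A] [Algebra S A]
    {x y : A} (h : Commute x y) (a b c d : S) : Commute (a • 1 + b • x) (c • 1 + d • y) :=
  have smul_one_commute (r : S) (z : A) : Commute (r • 1) z := (Commute.one_left z).smul_left r
  (smul_one_commute a _).add_left <|
    (smul_one_commute c _).symm.add_right ((h.smul_right d).smul_left b)

lemma cos_smul_one_add_sin_mul_I_smul_mem_unitary {A : Type*} [Ring A] [StarRing A] [Algebra ℂ A]
    [StarModule ℂ A] {z : A} (hz : IsSelfAdjoint z) (hz_mul_self : z * z = 1) (θ : ℝ) :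
    (Real.cos θ : ℂ) • 1 + (Real.sin θ * I : ℂ) • z ∈ unitary A := by
  set x : A := (Real.cos θ : ℂ) • 1 with hx
  set y : A := (Real.sin θ * I : ℂ) • z with hy
  have hxy : Commute x y := (Commute.one_left y).smul_left _
  have hstar : star (x + y) = x - y := by
    simp [hx, hy, -ofReal_cos, -ofReal_sin, hz.star_eq, sub_eq_add_neg]
  have hsq : x * x - y * y = 1 := by
    have hcs : (Real.cos θ : ℂ) * Real.cos θ - Real.sin θ * I * (Real.sin θ * I) = 1 := by
      push_cast
      linear_combination Complex.cos_sq_add_sin_sq θ - Complex.sin θ ^ 2 * I_sq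
    rw [hx, hy, smul_mul_smul_comm, smul_mul_smul_comm, one_mul, hz_mul_self, ← sub_smul, hcs,
      one_smul]
  rw [Unitary.mem_iff, hstar, ← hxy.mul_self_sub_mul_self_eq, ← hxy.mul_self_sub_mul_self_eq', hsq]
  exact ⟨rfl, rfl⟩

lemma semiconjBy_permMatrix {n S : Type*} [Fintype n] [DecidableEq n] [NonAssocSemiring S]
    (σ : Equiv.Perm n) (M : Matrix n n S) :
    SemiconjBy (σ.permMatrix S) M (M.submatrix σ σ) := by
  rw [SemiconjBy, PEquiv.toMatrix_toPEquiv_mul, PEquiv.mul_toMatrix_toPEquiv, submatrix_submatrix,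
    Equiv.self_comp_symm, Function.comp_id]

section TensorLegs

variable {m R : Type*} [DecidableEq m] [CommSemiring R]

/-- `X ⊗ 1`, the operator `X` acting on the first two of three tensor factors. -/
def leg₁₂ (X : Matrix (m × m) (m × m) R) : Matrix (m × m × m) (m × m × m) R :=
  reindex (Equiv.prodAssoc m m m) (Equiv.prodAssoc m m m) (X ⊗ₖ (1 : Matrix m m R))

/-- `1 ⊗ X`, the operator `X` acting on the last two of three tensor factors. -/
def leg₂₃ (X : Matrix (m × m) (m × m) R) : Matrix (m × m × m) (m × m × m) R :=
  (1 : Matrix m m R) ⊗ₖ X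

/-- The operator `X` acting on the first and third of three tensor factors. -/
def leg₁₃ (X : Matrix (m × m) (m × m) R) : Matrix (m × m × m) (m × m × m) R :=
  .of fun i j ↦ X (i.1, i.2.2) (j.1, j.2.2) * (1 : Matrix m m R) i.2.1 j.2.1

variable (m R) in
/-- The matrix of the swap `v ⊗ w ↦ w ⊗ v`. -/
def tensorSwap : Matrix (m × m) (m × m) R :=
  Equiv.Perm.permMatrix R (Equiv.prodComm m m)

variable (m) in
/-- The permutation of index triples that exchanges the first two indices. -/
def swap₁₂ : Equiv.Perm (m × m × m) where
  toFun i := (i.2.1, i.1, i.2.2)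
  invFun i := (i.2.1, i.1, i.2.2)

variable (m) in
/-- The permutation of index triples that exchanges the last two indices. -/
def swap₂₃ : Equiv.Perm (m × m × m) where
  toFun i := (i.1, i.2.2, i.2.1)
  invFun i := (i.1, i.2.2, i.2.1)

lemma leg₁₂_tensorSwap : leg₁₂ (tensorSwap m R) = (swap₁₂ m).permMatrix R := by
  ext ⟨i, j, k⟩ ⟨i', j', k'⟩
  simp only [leg₁₂, tensorSwap, swap₁₂, reindex_apply, submatrix_apply, kronecker_apply, one_apply,
    PEquiv.toMatrix_toPEquiv_apply, Pi.single_apply, Equiv.prodAssoc_symm_apply,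
    Equiv.prodComm_apply, Equiv.coe_fn_mk, Prod.swap_prod_mk, Prod.mk.injEq]
  grind

lemma leg₂₃_tensorSwap : leg₂₃ (tensorSwap m R) = (swap₂₃ m).permMatrix R := by
  ext ⟨i, j, k⟩ ⟨i', j', k'⟩
  simp [leg₂₃, tensorSwap, swap₂₃, PEquiv.toMatrix_apply, one_apply, ← ite_and, and_comm]

lemma leg₁₂_smul_one_add_smul_kronecker (a c : R) (A B : Matrix m m R) :
    leg₁₂ (a • 1 + c • A ⊗ₖ B) = a • 1 + c • A ⊗ₖ (B ⊗ₖ (1 : Matrix m m R)) := by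
  rw [leg₁₂, add_kronecker, smul_kronecker, smul_kronecker, one_kronecker_one, ← kronecker_assoc]
  simp only [reindex_apply, submatrix_add, submatrix_smul, Pi.add_apply, Pi.smul_apply,
    submatrix_one_equiv]

lemma leg₂₃_smul_one_add_smul_kronecker (a c : R) (A B : Matrix m m R) :
    leg₂₃ (a • 1 + c • A ⊗ₖ B) = a • 1 + c • (1 : Matrix m m R) ⊗ₖ (A ⊗ₖ B) := by
  rw [leg₂₃, kronecker_add, kronecker_smul, kronecker_smul, one_kronecker_one]

lemma leg₁₃_smul_one_add_smul_kronecker (a c : R) (A B : Matrix m m R) :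
    leg₁₃ (a • 1 + c • A ⊗ₖ B) = a • 1 + c • A ⊗ₖ ((1 : Matrix m m R) ⊗ₖ B) := by
  ext ⟨i, j, k⟩ ⟨i', j', k'⟩
  simp only [leg₁₃, of_apply, Matrix.add_apply, Matrix.smul_apply, kronecker_apply, one_apply,
    smul_eq_mul, Prod.mk.injEq]
  by_cases hj : j = j' <;> simp [hj]

variable [Fintype m]

lemma leg₁₂_mul (X Y : Matrix (m × m) (m × m) R) : leg₁₂ (X * Y) = leg₁₂ X * leg₁₂ Y := by
  simp only [leg₁₂, reindex_apply, submatrix_mul_equiv, ← mul_kronecker_mul, one_mul]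

lemma leg₂₃_mul (X Y : Matrix (m × m) (m × m) R) : leg₂₃ (X * Y) = leg₂₃ X * leg₂₃ Y := by
  simp only [leg₂₃, ← mul_kronecker_mul, one_mul]

/-- The Yang–Baxter equation `X₁₂ X₁₃ X₂₃ = X₂₃ X₁₃ X₁₂`. -/
def IsYangBaxter (X : Matrix (m × m) (m × m) R) : Prop :=
  leg₁₂ X * leg₁₃ X * leg₂₃ X = leg₂₃ X * leg₁₃ X * leg₁₂ X

/-- The braided Yang–Baxter equation `X₁₂ X₂₃ X₁₂ = X₂₃ X₁₂ X₂₃`. -/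
def IsBraided (X : Matrix (m × m) (m × m) R) : Prop :=
  leg₁₂ X * leg₂₃ X * leg₁₂ X = leg₂₃ X * leg₁₂ X * leg₂₃ X

lemma isBraided_tensorSwap : IsBraided (tensorSwap m R) := by
  rw [IsBraided, leg₁₂_tensorSwap, leg₂₃_tensorSwap]
  simp only [← permMatrix_mul]
  rfl

theorem IsYangBaxter.isBraided_tensorSwap_mul {X : Matrix (m × m) (m × m) R}
    (hX : IsYangBaxter X) : IsBraided (tensorSwap m R * X) := by
  have leg₁₃_swap₁₂ : (leg₁₃ X).submatrix (swap₁₂ m) (swap₁₂ m) = leg₂₃ X :=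
    ext fun _ _ ↦ mul_comm _ _
  have leg₂₃_swap₁₂ : (leg₂₃ X).submatrix (swap₁₂ m) (swap₁₂ m) = leg₁₃ X :=
    ext fun _ _ ↦ mul_comm _ _
  have leg₁₂_swap₂₃ : (leg₁₂ X).submatrix (swap₂₃ m) (swap₂₃ m) = leg₁₃ X := rfl
  have leg₁₃_swap₂₃ : (leg₁₃ X).submatrix (swap₂₃ m) (swap₂₃ m) = leg₁₂ X := rfl
  rw [IsBraided, leg₁₂_mul, leg₂₃_mul]
  refine braid_mul_of_yang_baxter isBraided_tensorSwap ?_ ?_ ?_ ?_ hX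
  · rw [leg₁₂_tensorSwap, ← leg₁₃_swap₁₂]
    exact semiconjBy_permMatrix _ _
  · rw [leg₁₂_tensorSwap, ← leg₂₃_swap₁₂]
    exact semiconjBy_permMatrix _ _
  · rw [leg₂₃_tensorSwap, ← leg₁₂_swap₂₃]
    exact semiconjBy_permMatrix _ _
  · rw [leg₂₃_tensorSwap, ← leg₁₃_swap₂₃]
    exact semiconjBy_permMatrix _ _

theorem isYangBaxter_smul_one_add_smul_kronecker {A B : Matrix m m R} (hAB : Commute A B)
    (a c : R) : IsYangBaxter (a • 1 + c • A ⊗ₖ B) := by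
  rw [IsYangBaxter, leg₁₂_smul_one_add_smul_kronecker, leg₁₃_smul_one_add_smul_kronecker,
    leg₂₃_smul_one_add_smul_kronecker]
  have h₁₂₁₃ : Commute (A ⊗ₖ (B ⊗ₖ (1 : Matrix m m R))) (A ⊗ₖ ((1 : Matrix m m R) ⊗ₖ B)) := by
    simp only [Commute, SemiconjBy, ← mul_kronecker_mul, one_mul, mul_one]
  have h₁₂₂₃ : Commute (A ⊗ₖ (B ⊗ₖ (1 : Matrix m m R))) ((1 : Matrix m m R) ⊗ₖ (A ⊗ₖ B)) := by
    simp only [Commute, SemiconjBy, ← mul_kronecker_mul, one_mul, mul_one, hAB.eq]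
  have h₁₃₂₃ : Commute (A ⊗ₖ ((1 : Matrix m m R) ⊗ₖ B)) ((1 : Matrix m m R) ⊗ₖ (A ⊗ₖ B)) := by
    simp only [Commute, SemiconjBy, ← mul_kronecker_mul, one_mul, mul_one]
  rw [(commute_smul_one_add_smul h₁₂₁₃ a c a c).eq, mul_assoc,
    (commute_smul_one_add_smul h₁₂₂₃ a c a c).eq, ← mul_assoc,
    (commute_smul_one_add_smul h₁₃₂₃ a c a c).eq]

lemma tensorSwap_mem_unitaryGroup {S : Type*} [CommRing S] [StarRing S] :
    tensorSwap m S ∈ unitaryGroup (m × m) S := by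
  rw [mem_unitaryGroup_iff, star_eq_conjTranspose, tensorSwap, conjTranspose_permMatrix,
    ← permMatrix_mul, inv_mul_cancel, permMatrix_one]

end TensorLegs

/-- The off-diagonal Hermitian involution `Y` on one qubit. The half angle makes the corner entries
of `Y ⊗ Y` equal to `-e^{iφ}` and `-e^{-iφ}`. -/
noncomputable def equatorialPauli (φ : ℝ) : Matrix (Fin 2) (Fin 2) ℂ :=
  !![0, I * exp (I * (φ / 2)); -I * exp (-(I * (φ / 2))), 0]

lemma equatorialPauli_isHermitian (φ : ℝ) : (equatorialPauli φ).IsHermitian := by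
  ext i j
  fin_cases i <;> fin_cases j <;> simp [equatorialPauli, ← exp_conj, conj_ofNat]

lemma equatorialPauli_zero_one_mul_one_zero (φ : ℝ) :
    equatorialPauli φ 0 1 * equatorialPauli φ 1 0 = 1 := by
  have hexp : exp (I * (φ / 2)) * exp (-(I * (φ / 2))) = 1 := by
    rw [← exp_add, add_neg_cancel, exp_zero]
  change I * exp (I * (φ / 2)) * (-I * exp (-(I * (φ / 2)))) = 1
  linear_combination -I ^ 2 * hexp - I_sq

lemma equatorialPauli_zero_one_mul_self (φ : ℝ) :
    equatorialPauli φ 0 1 * equatorialPauli φ 0 1 = -exp (I * φ) := by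
  have hexp : exp (I * (φ / 2)) * exp (I * (φ / 2)) = exp (I * φ) := by
    rw [← exp_add, ← mul_add, add_halves]
  change I * exp (I * (φ / 2)) * (I * exp (I * (φ / 2))) = -exp (I * φ)
  linear_combination I ^ 2 * hexp + exp (I * φ) * I_sq

lemma equatorialPauli_one_zero_mul_self (φ : ℝ) :
    equatorialPauli φ 1 0 * equatorialPauli φ 1 0 = -exp (-(I * φ)) := by
  have hexp : exp (-(I * (φ / 2))) * exp (-(I * (φ / 2))) = exp (-(I * φ)) := by
    rw [← exp_add, ← neg_add, ← mul_add, add_halves]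
  change -I * exp (-(I * (φ / 2))) * (-I * exp (-(I * (φ / 2)))) = -exp (-(I * φ))
  linear_combination I ^ 2 * hexp + exp (-(I * φ)) * I_sq

lemma equatorialPauli_apply_self (φ : ℝ) (i : Fin 2) : equatorialPauli φ i i = 0 := by
  fin_cases i <;> rfl

lemma equatorialPauli_mul_self (φ : ℝ) : equatorialPauli φ * equatorialPauli φ = 1 := by
  have h := equatorialPauli_zero_one_mul_one_zero φ
  ext i j
  fin_cases i <;> fin_cases j <;>
    simp [mul_apply, equatorialPauli_apply_self, h, mul_comm (equatorialPauli φ 1 0)]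

/-- The gate `𝔅ₙ,φ` with an arbitrary angle `θ` in place of `2π/n`. -/
noncomputable def rotationGate (θ φ : ℝ) : Matrix (Fin 4) (Fin 4) ℂ :=
  let a : ℂ := (Real.cos θ : ℂ)
  let b : ℂ := (Real.sin θ : ℂ)
  !![a, 0, 0, -I * b * exp (I * φ);
     0, I * b, a, 0;
     0, a, I * b, 0;
     -I * b * exp (-(I * φ)), 0, 0, a]

/-- The gate as a matrix indexed by pairs of bits: `P (cos θ + i sin θ Y ⊗ Y)`. -/
noncomputable def swapRotation (θ φ : ℝ) : Matrix (Fin 2 × Fin 2) (Fin 2 × Fin 2) ℂ :=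
  tensorSwap (Fin 2) ℂ *
    ((Real.cos θ : ℂ) • 1 + (Real.sin θ * I : ℂ) • equatorialPauli φ ⊗ₖ equatorialPauli φ)

lemma swapRotation_mem_unitaryGroup (θ φ : ℝ) :
    swapRotation θ φ ∈ unitaryGroup (Fin 2 × Fin 2) ℂ := by
  refine mul_mem tensorSwap_mem_unitaryGroup
    (cos_smul_one_add_sin_mul_I_smul_mem_unitary ?_ ?_ θ)
  · rw [IsSelfAdjoint, star_eq_conjTranspose, conjTranspose_kronecker, equatorialPauli_isHermitian]
  · rw [← mul_kronecker_mul, equatorialPauli_mul_self, one_kronecker_one]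

lemma isBraided_swapRotation (θ φ : ℝ) : IsBraided (swapRotation θ φ) :=
  (isYangBaxter_smul_one_add_smul_kronecker (Commute.refl _) _ _).isBraided_tensorSwap_mul

lemma rotationGate_eq_reindex (θ φ : ℝ) :
    rotationGate θ φ = reindex finProdFinEquiv finProdFinEquiv (swapRotation θ φ) := by
  rw [swapRotation, tensorSwap, PEquiv.toMatrix_toPEquiv_mul]
  ext i j
  fin_cases i <;> fin_cases j <;>
    simp [rotationGate, finProdFinEquiv, Fin.divNat, Fin.modNat, one_apply,
      equatorialPauli_apply_self, equatorialPauli_zero_one_mul_one_zero,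
      mul_comm (equatorialPauli φ 1 0) (equatorialPauli φ 0 1),
      equatorialPauli_zero_one_mul_self, equatorialPauli_one_zero_mul_self, mul_comm I]

/-- The lexicographic numbering of triples of bits, underlying both `RI` and `IR`. -/
def tripleEquivFin8 : Fin 2 × Fin 2 × Fin 2 ≃ Fin 8 :=
  ((Equiv.refl (Fin 2)).prodCongr finProdFinEquiv).trans finProdFinEquiv

lemma RI_reindex (X : Matrix (Fin 2 × Fin 2) (Fin 2 × Fin 2) ℂ) :
    RI (reindex finProdFinEquiv finProdFinEquiv X)
      = reindexAlgEquiv ℂ ℂ tripleEquivFin8 (leg₁₂ X) := by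
  have hindex : Prod.map finProdFinEquiv.symm id ∘ (finProdFinEquiv (m := 4) (n := 2)).symm
      = (Equiv.prodAssoc (Fin 2) (Fin 2) (Fin 2)).symm ∘ tripleEquivFin8.symm := by
    decide
  exact congrArg (fun f ↦ (X ⊗ₖ (1 : Matrix (Fin 2) (Fin 2) ℂ)).submatrix f f) hindex

lemma IR_reindex (X : Matrix (Fin 2 × Fin 2) (Fin 2 × Fin 2) ℂ) :
    IR (reindex finProdFinEquiv finProdFinEquiv X)
      = reindexAlgEquiv ℂ ℂ tripleEquivFin8 (leg₂₃ X) :=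
  rfl

lemma IsBraided.RI_mul_IR_mul_RI {X : Matrix (Fin 2 × Fin 2) (Fin 2 × Fin 2) ℂ}
    (hX : IsBraided X) :
    letI R := reindex finProdFinEquiv finProdFinEquiv X
    RI R * IR R * RI R = IR R * RI R * IR R := by
  rw [RI_reindex, IR_reindex]
  simp only [← map_mul]
  exact congrArg _ hX

theorem Bnφ_unitary_and_yang_baxter_general (θ φ : ℝ) :
    rotationGate θ φ * (rotationGate θ φ)ᴴ = 1 ∧
    RI (rotationGate θ φ) * IR (rotationGate θ φ) * RI (rotationGate θ φ)
      = IR (rotationGate θ φ) * RI (rotationGate θ φ) * IR (rotationGate θ φ) := by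
  have hU := mem_unitaryGroup_iff.mp (swapRotation_mem_unitaryGroup θ φ)
  rw [rotationGate_eq_reindex]
  refine ⟨?_, (isBraided_swapRotation θ φ).RI_mul_IR_mul_RI⟩
  rw [conjTranspose_reindex, ← star_eq_conjTranspose]
  simp only [reindex_apply, submatrix_mul_equiv, hU, submatrix_one_equiv]

/-- 𝔅ₙ,φ is unitary and satisfies the braided Yang–Baxter equation. -/
theorem Bnφ_unitary_and_yang_baxter (n : ℕ) (hn : 2 ≤ n) (φ : ℝ) :
    Bnφ n φ * (Bnφ n φ)ᴴ = 1 ∧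
    RI (Bnφ n φ) * IR (Bnφ n φ) * RI (Bnφ n φ)
      = IR (Bnφ n φ) * RI (Bnφ n φ) * IR (Bnφ n φ) :=
  Bnφ_unitary_and_yang_baxter_general (2 * Real.pi / n) φ
end

section
/- Let n ≥ 2 be an integer, ω = e^{2πi/n}, and let j, k be natural numbers (the gradings of the basis vectors |0⟩ and |1⟩). Define the 4×4 matrix 𝔅_ψ = [[ω^{j²}, 0, 0, 0], [0, 0, ω^{jk}, 0], [0, ω^{jk}, 0, 0], [0, 0, 0, ω^{k²}]]. Then 𝔅_ψ is entangling—there exist u, v ∈ ℂ² such that 𝔅_ψ·(u ⊗ v) is not a product state—if and only if ω^{j²}·ω^{k²} ≠ ω^{2jk}. -/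
/-!
Read `w : K⁴` as the `2 × 2` matrix of its amplitudes: product states are the matrices of
determinant zero. A gate that swaps the two factors and then multiplies the amplitudes of
`|00⟩`, `|01⟩`, `|10⟩`, `|11⟩` by `a, b, c, d` sends `u ⊗ v` to a vector of determinant
`(a d - b c) u₀ u₁ v₀ v₁`. This always vanishes if `a d = b c`; otherwise it is nonzero at
`(1, 1) ⊗ (1, 1)`.
-/

open Matrix Complex

/-- The braiding gate 𝔅_ψ coming from the anyonic (graded) braiding, where the basis
vectors |0⟩ and |1⟩ have degrees j and k, and ω = e^{2πi/n}. -/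
noncomputable def Bψ (n : ℕ) (j k : ℕ) : Matrix (Fin 4) (Fin 4) ℂ :=
  let ω : ℂ := Complex.exp (2 * Real.pi * Complex.I / n)
  !![ω ^ (j ^ 2), 0, 0, 0;
     0, 0, ω ^ (j * k), 0;
     0, ω ^ (j * k), 0, 0;
     0, 0, 0, ω ^ (k ^ 2)]

/-- The Kronecker product u ⊗ v of two vectors in ℂ². -/
def kron2 (u v : Fin 2 → ℂ) : Fin 4 → ℂ :=
  ![u 0 * v 0, u 0 * v 1, u 1 * v 0, u 1 * v 1]

section Semiring

variable {R : Type*} [CommSemiring R]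

/-- The tensor product `u ⊗ v` in the basis `|00⟩, |01⟩, |10⟩, |11⟩`: `kron2` over an arbitrary
commutative semiring. -/
def tensorVec (u v : Fin 2 → R) : Fin 4 → R :=
  ![u 0 * v 0, u 0 * v 1, u 1 * v 0, u 1 * v 1]

/-- Product states: the vectors that are pure tensors, the zero vector included. -/
def IsProductState (w : Fin 4 → R) : Prop :=
  ∃ u v : Fin 2 → R, w = tensorVec u v

/-- Entangling gates: those that send some product state to a vector that is not one. The gate is
not required to be invertible. -/
def IsEntangling (G : Matrix (Fin 4) (Fin 4) R) : Prop :=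
  ∃ u v : Fin 2 → R, ¬ IsProductState (G *ᵥ tensorVec u v)

/-- The swap of the two tensor factors followed by the diagonal gate with entries `a, b, c, d`.
Braidings of graded spaces act on homogeneous basis vectors in this way. -/
def phaseSwap (a b c d : R) : Matrix (Fin 4) (Fin 4) R :=
  !![a, 0, 0, 0;
     0, 0, b, 0;
     0, c, 0, 0;
     0, 0, 0, d]

theorem phaseSwap_mulVec (a b c d : R) (w : Fin 4 → R) :
    phaseSwap a b c d *ᵥ w = ![a * w 0, b * w 2, c * w 1, d * w 3] := by
  ext i
  fin_cases i <;> simp [phaseSwap, mulVec, dotProduct, Fin.sum_univ_four]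

theorem IsProductState.mul_eq_mul {w : Fin 4 → R} (hw : IsProductState w) :
    w 0 * w 3 = w 1 * w 2 := by
  obtain ⟨u, v, rfl⟩ := hw
  change u 0 * v 0 * (u 1 * v 1) = u 0 * v 1 * (u 1 * v 0)
  ring

end Semiring

section Field

variable {K : Type*} [Field K]

theorem isProductState_iff_mul_eq_mul {w : Fin 4 → K} :
    IsProductState w ↔ w 0 * w 3 = w 1 * w 2 := by
  refine ⟨IsProductState.mul_eq_mul, fun hdet => ?_⟩
  by_cases h0 : w 0 = 0
  · have h12 : w 1 = 0 ∨ w 2 = 0 := by simpa [h0] using hdet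
    rcases h12 with h1 | h2
    · refine ⟨![0, 1], ![w 2, w 3], ?_⟩
      ext i
      fin_cases i <;> simp [tensorVec, h0, h1]
    · refine ⟨![w 1, w 3], ![0, 1], ?_⟩
      ext i
      fin_cases i <;> simp [tensorVec, h0, h2]
  · have h3 : w 3 = w 2 / w 0 * w 1 := by
      field_simp
      linear_combination hdet
    refine ⟨![1, w 2 / w 0], ![w 0, w 1], ?_⟩
    ext i
    fin_cases i <;> simp [tensorVec, h0, h3]

theorem isProductState_phaseSwap_mulVec_tensorVec_iff (a b c d : K) (u v : Fin 2 → K) :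
    IsProductState (phaseSwap a b c d *ᵥ tensorVec u v) ↔
      a * d * (u 0 * u 1 * v 0 * v 1) = b * c * (u 0 * u 1 * v 0 * v 1) := by
  rw [isProductState_iff_mul_eq_mul, phaseSwap_mulVec]
  change a * (u 0 * v 0) * (d * (u 1 * v 1)) = b * (u 1 * v 0) * (c * (u 0 * v 1)) ↔ _
  ring_nf

theorem isEntangling_phaseSwap_iff (a b c d : K) :
    IsEntangling (phaseSwap a b c d) ↔ a * d ≠ b * c := by
  simp only [IsEntangling, isProductState_phaseSwap_mulVec_tensorVec_iff]
  constructor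
  · rintro ⟨u, v, hdet⟩ hphase
    exact hdet (by rw [hphase])
  · intro hphase
    exact ⟨1, 1, by simpa using hphase⟩

theorem Bψ_entangling_iff_general (ω : K) (j k : ℕ) :
    IsEntangling (phaseSwap (ω ^ j ^ 2) (ω ^ (j * k)) (ω ^ (j * k)) (ω ^ k ^ 2)) ↔
      ω ^ j ^ 2 * ω ^ k ^ 2 ≠ ω ^ (2 * j * k) := by
  rw [isEntangling_phaseSwap_iff, ← pow_two (ω ^ (j * k)), ← pow_mul', ← mul_assoc]

end Field

/-- 𝔅_ψ is entangling iff ω^{j²}·ω^{k²} ≠ ω^{2jk}. -/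
theorem Bψ_entangling_iff (n : ℕ) (hn : 2 ≤ n) (j k : ℕ) :
    (∃ u v : Fin 2 → ℂ, ¬ ∃ u' v' : Fin 2 → ℂ,
        (Bψ n j k).mulVec (kron2 u v) = kron2 u' v')
      ↔ (Complex.exp (2 * Real.pi * Complex.I / n)) ^ (j ^ 2)
          * (Complex.exp (2 * Real.pi * Complex.I / n)) ^ (k ^ 2)
        ≠ (Complex.exp (2 * Real.pi * Complex.I / n)) ^ (2 * j * k) :=
  Bψ_entangling_iff_general (Complex.exp (2 * Real.pi * Complex.I / n)) j k
end
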